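/- arXiv:2511.09202 — 3 statements merged into one kernel-verified Lean document; each statement's English description precedes it below -/
import Mathlib

section
/- Let k : [0,∞) → ℝ be a profile function (C¹ on [0,1], non-increasing, convex, k'(t) < 0 for all t ∈ [0,1), with k(1) = 0, k'(1) = 0, and k(t) = 0 for t ≥ 1). Given points x₁, …, xₙ ∈ ℝ^d and bandwidth h > 0, define L(X) = Σ_{1 ≤ i ≤ j ≤ n} k(‖x_i − x_j‖²/h²). Then the total gradient of L at the state X = (x₁, …, xₙ) vanishes if and only if for all pairs (i, j) ∈ [n]², ‖x_i − x_j‖ < h holds if and only if x_j = x_i; that is, any two sample points either coincide or are at distance at least h from each other. -/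
noncomputable section

open scoped BigOperators

/-- Points of `ℝ^d`. -/
abbrev Pt (d : ℕ) : Type := EuclideanSpace ℝ (Fin d)

/-- A state `X = (x₁, …, xₙ)`, viewed as a point of the Euclidean space `ℝ^{dn}`. -/
abbrev State (d n : ℕ) : Type := PiLp 2 (fun _ : Fin n => Pt d)

/-- The BMS objective function `L(X) = Σ_{1 ≤ i ≤ j ≤ n} k(‖x_i − x_j‖²/h²)`. -/
def BMSObjective {d n : ℕ} (k : ℝ → ℝ) (h : ℝ) (X : State d n) : ℝ :=
  ∑ i : Fin n, ∑ j ∈ Finset.univ.filter (fun j => i ≤ j), k (‖X i - X j‖ ^ 2 / h ^ 2)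

/-!
The objective is a sum of terms `k (‖A x‖ ^ 2)`, one for each pair, where `A` is a rescaled
difference of two points and hence *linear* in the state. Differentiating at `x` in the
direction of `x` itself gives the sum of the terms `2 k'(‖A x‖ ^ 2) ‖A x‖ ^ 2`. As `k' ≤ 0`, nothing
can cancel: at a critical point every term vanishes, so each pair has `A x = 0` (the points
coincide) or `k'(‖A x‖ ^ 2) = 0` (they are at least `h` apart, since `k'` vanishes exactly on
`[1, ∞)`). Either alternative kills the derivative of the corresponding summand in every direction,
which is the converse.
-/

section CriticalPoints

variable {H E : Type*} [NormedAddCommGroup H] [NormedSpace ℝ H]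
  [NormedAddCommGroup E] [InnerProductSpace ℝ E] {φ φ' : ℝ → ℝ}

lemma hasFDerivAt_comp_norm_sq_clm
    (hφ : ∀ t ∈ Set.Ici (0 : ℝ), HasDerivWithinAt φ (φ' t) (Set.Ici 0) t) (A : H →L[ℝ] E) (x : H) :
    HasFDerivAt (fun y => φ (‖A y‖ ^ 2))
      (φ' (‖A x‖ ^ 2) • (2 : ℝ) • (innerSL ℝ (A x)).comp A) x := by
  have hsq : HasFDerivAt (fun y => ‖A y‖ ^ 2) ((2 : ℝ) • (innerSL ℝ (A x)).comp A) x := by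
    simpa only [ofNat_smul_eq_nsmul] using A.hasFDerivAt.norm_sq
  exact (hφ _ (sq_nonneg ‖A x‖)).comp_hasFDerivAt x hsq (.of_forall fun y => sq_nonneg ‖A y‖)

lemma fderiv_sum_comp_norm_sq_clm_apply {α : Type*}
    (hφ : ∀ t ∈ Set.Ici (0 : ℝ), HasDerivWithinAt φ (φ' t) (Set.Ici 0) t)
    (s : Finset α) (A : α → H →L[ℝ] E) (x v : H) :
    fderiv ℝ (fun y => ∑ a ∈ s, φ (‖A a y‖ ^ 2)) x v =
      ∑ a ∈ s, φ' (‖A a x‖ ^ 2) * (2 * inner ℝ (A a x) (A a v)) := by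
  rw [(HasFDerivAt.fun_sum fun a _ => hasFDerivAt_comp_norm_sq_clm hφ (A a) x).fderiv]
  simp only [sum_apply, smul_apply, ContinuousLinearMap.comp_apply, innerSL_apply_apply,
    smul_eq_mul]

theorem fderiv_sum_comp_norm_sq_clm_eq_zero_iff {α : Type*}
    (hφ : ∀ t ∈ Set.Ici (0 : ℝ), HasDerivWithinAt φ (φ' t) (Set.Ici 0) t)
    (hφ' : ∀ t ∈ Set.Ici (0 : ℝ), φ' t ≤ 0) (s : Finset α) (A : α → H →L[ℝ] E) (x : H) :
    fderiv ℝ (fun y => ∑ a ∈ s, φ (‖A a y‖ ^ 2)) x = 0 ↔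
      ∀ a ∈ s, φ' (‖A a x‖ ^ 2) = 0 ∨ A a x = 0 := by
  constructor
  · intro hcrit
    have hradial : ∑ a ∈ s, φ' (‖A a x‖ ^ 2) * (2 * inner ℝ (A a x) (A a x)) = 0 := by
      rw [← fderiv_sum_comp_norm_sq_clm_apply hφ, hcrit, zero_apply]
    have hnonpos : ∀ a ∈ s, φ' (‖A a x‖ ^ 2) * (2 * inner ℝ (A a x) (A a x)) ≤ 0 := fun a _ =>
      mul_nonpos_of_nonpos_of_nonneg (hφ' _ (sq_nonneg ‖A a x‖))
        (mul_nonneg zero_le_two real_inner_self_nonneg)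
    intro a ha
    simpa using (Finset.sum_eq_zero_iff_of_nonpos hnonpos).1 hradial a ha
  · intro hzero
    ext v
    rw [fderiv_sum_comp_norm_sq_clm_apply hφ, zero_apply]
    refine Finset.sum_eq_zero fun a ha => ?_
    rcases hzero a ha with hderiv | hA
    · rw [hderiv, zero_mul]
    · rw [hA, inner_zero_left, mul_zero, mul_zero]

end CriticalPoints

lemma gradient_eq_zero_iff_fderiv_eq_zero {𝕜 H : Type*} [RCLike 𝕜] [NormedAddCommGroup H]
    [InnerProductSpace 𝕜 H] [CompleteSpace H] {f : H → 𝕜} {x : H} :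
    gradient f x = 0 ↔ fderiv 𝕜 f x = 0 :=
  (InnerProductSpace.toDual 𝕜 H).symm.map_eq_zero_iff

lemma eq_zero_of_hasDerivWithinAt_of_eqOn_const {𝕜 F : Type*} [NontriviallyNormedField 𝕜]
    [NormedAddCommGroup F] [NormedSpace 𝕜 F] {f : 𝕜 → F} {f' c : F} {s u : Set 𝕜} {x : 𝕜}
    (hf : HasDerivWithinAt f f' s x) (hus : u ⊆ s) (hu : UniqueDiffWithinAt 𝕜 u x) (hx : x ∈ u)
    (hc : Set.EqOn f (fun _ => c) u) : f' = 0 :=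
  hu.eq_deriv _ (hf.mono hus) ((hasDerivWithinAt_const x u c).congr hc (hc hx))

section Profile

variable {k k' : ℝ → ℝ}

lemma profile_deriv_eq_zero_iff_one_le
    (hk : ∀ t ∈ Set.Ici (0 : ℝ), HasDerivWithinAt k (k' t) (Set.Ici 0) t)
    (hk'neg : ∀ t, 0 ≤ t → t < 1 → k' t < 0) (hkzero : ∀ t : ℝ, 1 ≤ t → k t = 0)
    {t : ℝ} (ht : 0 ≤ t) : k' t = 0 ↔ 1 ≤ t := by
  refine ⟨fun hzero => not_lt.1 fun hlt => (hk'neg t ht hlt).ne hzero, fun hle => ?_⟩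
  exact eq_zero_of_hasDerivWithinAt_of_eqOn_const (hk t ht) (Set.Ici_subset_Ici.2 zero_le_one)
    (uniqueDiffOn_Ici 1 t hle) hle hkzero

lemma profile_deriv_nonpos
    (hk : ∀ t ∈ Set.Ici (0 : ℝ), HasDerivWithinAt k (k' t) (Set.Ici 0) t)
    (hk'neg : ∀ t, 0 ≤ t → t < 1 → k' t < 0) (hkzero : ∀ t : ℝ, 1 ≤ t → k t = 0)
    {t : ℝ} (ht : 0 ≤ t) : k' t ≤ 0 := by
  rcases lt_or_ge t 1 with hlt | hle
  · exact (hk'neg t ht hlt).le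
  · exact ((profile_deriv_eq_zero_iff_one_le hk hk'neg hkzero ht).2 hle).le

end Profile

section ScaledDiff

variable {ι E : Type*} [NormedAddCommGroup E] [NormedSpace ℝ E]

/-- The argument `(x_i - x_j) / h` of the kernel, as a continuous linear function of the state.
The bandwidth is part of the linear map, so that the profile is evaluated at its squared norm. -/
def scaledDiff (h : ℝ) (i j : ι) : PiLp 2 (fun _ : ι => E) →L[ℝ] E :=
  h⁻¹ • (PiLp.proj (𝕜 := ℝ) 2 (fun _ => E) i - PiLp.proj (𝕜 := ℝ) 2 (fun _ => E) j)

lemma scaledDiff_apply (h : ℝ) (i j : ι) (X : PiLp 2 (fun _ : ι => E)) :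
    scaledDiff h i j X = h⁻¹ • (X i - X j) := rfl

lemma norm_scaledDiff_sq (h : ℝ) (i j : ι) (X : PiLp 2 (fun _ : ι => E)) :
    ‖scaledDiff h i j X‖ ^ 2 = ‖X i - X j‖ ^ 2 / h ^ 2 := by
  rw [scaledDiff_apply, norm_smul, mul_pow, norm_inv, inv_pow, Real.norm_eq_abs, sq_abs,
    inv_mul_eq_div]

lemma one_le_norm_scaledDiff_sq_iff {h : ℝ} (hh : 0 < h) {i j : ι}
    {X : PiLp 2 (fun _ : ι => E)} : 1 ≤ ‖scaledDiff h i j X‖ ^ 2 ↔ h ≤ ‖X i - X j‖ := by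
  rw [norm_scaledDiff_sq, one_le_div (pow_pos hh 2), sq_le_sq₀ hh.le (norm_nonneg _)]

lemma scaledDiff_eq_zero_iff {h : ℝ} (hh : h ≠ 0) {i j : ι} {X : PiLp 2 (fun _ : ι => E)} :
    scaledDiff h i j X = 0 ↔ X i = X j := by
  rw [scaledDiff_apply, smul_eq_zero_iff_right (inv_ne_zero hh), sub_eq_zero]

end ScaledDiff

lemma forall_le_separated_or_eq_iff {ι E : Type*} [LinearOrder ι] [SeminormedAddCommGroup E]
    {h : ℝ} (hh : 0 < h) (x : ι → E) :
    (∀ i j, i ≤ j → h ≤ ‖x i - x j‖ ∨ x i = x j) ↔ ∀ i j, (‖x i - x j‖ < h ↔ x j = x i) := by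
  constructor
  · intro hsep i j
    have hij : h ≤ ‖x i - x j‖ ∨ x i = x j := by
      rcases le_total i j with hle | hle
      · exact hsep i j hle
      · simpa only [norm_sub_rev, eq_comm] using hsep j i hle
    exact ⟨fun hlt => (hij.resolve_left hlt.not_ge).symm, fun heq => by simpa [heq] using hh⟩
  · intro hclust i j _
    exact (le_or_gt h ‖x i - x j‖).imp_right fun hlt => ((hclust i j).1 hlt).symm

theorem gradient_BMSObjective_eq_zero_iff_ideal_clustering_general
    {ι E : Type*} [Fintype ι] [LinearOrder ι] [NormedAddCommGroup E] [InnerProductSpace ℝ E]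
    [CompleteSpace E] {k k' : ℝ → ℝ}
    (hk : ∀ t ∈ Set.Ici (0 : ℝ), HasDerivWithinAt k (k' t) (Set.Ici 0) t)
    (hk'neg : ∀ t, 0 ≤ t → t < 1 → k' t < 0) (hkzero : ∀ t : ℝ, 1 ≤ t → k t = 0)
    {h : ℝ} (hh : 0 < h) (X : PiLp 2 (fun _ : ι => E)) :
    gradient (fun Y : PiLp 2 (fun _ : ι => E) =>
        ∑ i, ∑ j with i ≤ j, k (‖Y i - Y j‖ ^ 2 / h ^ 2)) X = 0 ↔
      ∀ i j, (‖X i - X j‖ < h ↔ X j = X i) := by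
  have hcrit := fderiv_sum_comp_norm_sq_clm_eq_zero_iff hk
    (fun _ => profile_deriv_nonpos hk hk'neg hkzero)
    (Finset.univ.sigma fun i : ι => {j | i ≤ j}) (fun p => scaledDiff h p.1 p.2) X
  simp only [norm_scaledDiff_sq, Finset.sum_sigma] at hcrit
  rw [gradient_eq_zero_iff_fderiv_eq_zero, hcrit, ← forall_le_separated_or_eq_iff hh X]
  simp only [Sigma.forall, Finset.mem_sigma, Finset.mem_univ, true_and, Finset.mem_filter,
    ← norm_scaledDiff_sq, profile_deriv_eq_zero_iff_one_le hk hk'neg hkzero (sq_nonneg _),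
    one_le_norm_scaledDiff_sq_iff hh, scaledDiff_eq_zero_iff hh.ne']

/-- For a profile function `k` (C¹, non-increasing, convex, `k' < 0` on
`[0,1)`, with `k(1) = 0`, `k'(1) = 0`, extended by `0` beyond `1`), the gradient of the BMS
objective `L` vanishes at the state `X` if and only if any two sample points either coincide
or are at distance at least `h` from each other. -/
theorem gradient_BMSObjective_eq_zero_iff_ideal_clustering
    {d n : ℕ} (k k' : ℝ → ℝ)
    (hC1 : ∀ t ∈ Set.Ici (0 : ℝ), HasDerivWithinAt k (k' t) (Set.Ici 0) t)
    (hk'cont : ContinuousOn k' (Set.Ici 0))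
    (hknonneg : ∀ t ∈ Set.Icc (0 : ℝ) 1, 0 ≤ k t)
    (hanti : AntitoneOn k (Set.Icc 0 1))
    (hconv : ConvexOn ℝ (Set.Icc 0 1) k)
    (hk'neg : ∀ t, 0 ≤ t → t < 1 → k' t < 0)
    (hk1 : k 1 = 0) (hk'1 : k' 1 = 0)
    (hkzero : ∀ t : ℝ, 1 ≤ t → k t = 0)
    (h : ℝ) (hh : 0 < h) (X : State d n) :
    gradient (BMSObjective k h) X = 0 ↔
      ∀ i j : Fin n, (‖X i - X j‖ < h ↔ X j = X i) :=
  gradient_BMSObjective_eq_zero_iff_ideal_clustering_general hC1 hk'neg hkzero hh X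
end
end

section
/- Let k : [0,∞) → ℝ be a profile function (C¹ on [0,1], non-increasing, convex, k'(t) < 0 on [0,1), k(1) = 0, k'(1) = 0, k(t) = 0 for t ≥ 1), G(u) = −k'(‖u‖²) the associated weight function, x₁, …, xₙ ∈ ℝ^d, h > 0, and L(X) = Σ_{1 ≤ i ≤ j ≤ n} k(‖x_i − x_j‖²/h²). Then the gradient of L at X = (x₁, …, xₙ) vanishes if and only if X is a fixed point of the blurring mean-shift transformation, i.e. for every i ∈ [n], x_i = (Σ_{j=1}^n G((x_i − x_j)/h)·x_j) / (Σ_{j=1}^n G((x_i − x_j)/h)); the denominator is positive because G(0) = −k'(0) > 0. -/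
noncomputable section

open scoped BigOperators

/-- The weight function `G(u) = −k'(‖u‖²)` associated with the profile `k`. -/
def weightFn {d : ℕ} (k' : ℝ → ℝ) (u : Pt d) : ℝ := -k' (‖u‖ ^ 2)

/-!
The pairs `(i, j)` and `(j, i)` contribute opposite forces, so differentiating the sum over `i ≤ j`
produces, in the `i`-th block, the total force `∑ j, g (X i - X j)` over *all* `j`, where `g` is the
gradient of the pair potential. For the potential `k (‖u‖ ^ 2 / h ^ 2)` this force is a nonzero
multiple of `∑ j, w j • (X i - X j)` with `w j = G ((X i - X j) / h)`, and it vanishes exactly when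
`X i` is the `w`-weighted average of the points.
-/

lemma sum_sum_filter_le_add_swap {ι M : Type*} [Fintype ι] [LinearOrder ι] [AddCommMonoid M]
    (F : ι → ι → M) (hF : ∀ i, F i i = 0) :
    ∑ i, ∑ j with i ≤ j, (F i j + F j i) = ∑ i, ∑ j, F i j := by
  have sum_upper_swap : ∑ i, ∑ j, (if i ≤ j then F j i else 0) =
      ∑ i, ∑ j, if j ≤ i then F i j else 0 := Finset.sum_comm
  simp only [Finset.sum_add_distrib, Finset.sum_filter]
  rw [sum_upper_swap]
  simp only [← Finset.sum_add_distrib]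
  refine Finset.sum_congr rfl fun i _ => Finset.sum_congr rfl fun j _ => ?_
  rcases lt_trichotomy i j with hij | rfl | hij
  · simp [hij.le, hij.not_ge]
  · simp [hF]
  · simp [hij.le, hij.not_ge]

lemma sum_smul_sub_eq_zero_iff_eq_centerMass {ι K E : Type*} [Field K] [AddCommGroup E]
    [Module K E] {s : Finset ι} {w : ι → K} (hw : ∑ j ∈ s, w j ≠ 0) (x : E) (y : ι → E) :
    ∑ j ∈ s, w j • (x - y j) = 0 ↔ x = s.centerMass w y := by
  simp only [smul_sub, Finset.sum_sub_distrib]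
  rw [← Finset.sum_smul, sub_eq_zero, Finset.centerMass, eq_inv_smul_iff₀ hw]

lemma hasGradientAt_sum {ι 𝕜 F : Type*} [RCLike 𝕜] [NormedAddCommGroup F] [InnerProductSpace 𝕜 F]
    [CompleteSpace F] {s : Finset ι} {f : ι → F → 𝕜} {f' : ι → F} {x : F}
    (hf : ∀ i ∈ s, HasGradientAt (f i) (f' i) x) :
    HasGradientAt (fun y => ∑ i ∈ s, f i y) (∑ i ∈ s, f' i) x := by
  rw [hasGradientAt_iff_hasFDerivAt, map_sum]
  exact HasFDerivAt.fun_sum fun i hi => (hf i hi).hasFDerivAt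

lemma inner_piLp_single_left {ι 𝕜 : Type*} {E : ι → Type*} [Fintype ι] [DecidableEq ι] [RCLike 𝕜]
    [∀ i, NormedAddCommGroup (E i)] [∀ i, InnerProductSpace 𝕜 (E i)] (i : ι) (v : E i)
    (Y : PiLp 2 E) : inner 𝕜 (PiLp.single 2 i v) Y = inner 𝕜 v (Y i) := by
  rw [PiLp.inner_apply, Fintype.sum_eq_single i fun j hj => by simp [hj], PiLp.single_eq_same]

lemma hasGradientAt_comp_apply_sub_apply {ι 𝕜 E : Type*} [Fintype ι] [DecidableEq ι] [RCLike 𝕜]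
    [NormedAddCommGroup E] [InnerProductSpace 𝕜 E] [CompleteSpace E] {f : E → 𝕜} {v : E}
    {X : PiLp 2 fun _ : ι => E} {i j : ι} (hf : HasGradientAt f v (X i - X j)) :
    HasGradientAt (fun Y : PiLp 2 fun _ : ι => E => f (Y i - Y j))
      (PiLp.single 2 i v - PiLp.single 2 j v) X := by
  have hasFDerivAt_apply_sub_apply := (PiLp.hasFDerivAt_apply (𝕜 := 𝕜) 2 X i).sub
    (PiLp.hasFDerivAt_apply 2 X j)
  rw [hasGradientAt_iff_hasFDerivAt]
  refine (hf.hasFDerivAt.comp X hasFDerivAt_apply_sub_apply).congr_fderiv ?_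
  ext Y
  simp [inner_piLp_single_left]

section PairwiseEnergy

variable {ι E : Type*} [Fintype ι] [LinearOrder ι] [NormedAddCommGroup E]

/-- The total energy of a finite family of points interacting through the pair potential `f`. Each
unordered pair is counted once, and each diagonal pair contributes the constant `f 0`, so that
`BMSObjective k h` is the case `f u = k (‖u‖ ^ 2 / h ^ 2)`. -/
def pairwiseEnergy (f : E → ℝ) (X : PiLp 2 fun _ : ι => E) : ℝ :=
  ∑ i, ∑ j with i ≤ j, f (X i - X j)

variable [InnerProductSpace ℝ E] [CompleteSpace E] {f : E → ℝ} {g : E → E}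
  {X : PiLp 2 fun _ : ι => E}

lemma hasGradientAt_pairwiseEnergy (hf : ∀ u, HasGradientAt f (g u) u) (hg : g.Odd) :
    HasGradientAt (pairwiseEnergy f) (WithLp.toLp 2 fun i => ∑ j, g (X i - X j)) X := by
  have hasGradientAt_pair (i j : ι) : HasGradientAt (fun Y : PiLp 2 fun _ : ι => E => f (Y i - Y j))
      (PiLp.single 2 i (g (X i - X j)) + PiLp.single 2 j (g (X j - X i))) X := by
    rw [← neg_sub (X i), hg, PiLp.single_neg, ← sub_eq_add_neg]
    exact hasGradientAt_comp_apply_sub_apply (hf _)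
  have : IsAddTorsionFree E := .of_isTorsionFree ℝ E
  have sum_pair_gradients : ∑ i, ∑ j with i ≤ j,
      (PiLp.single 2 i (g (X i - X j)) + PiLp.single 2 j (g (X j - X i))) =
        WithLp.toLp 2 fun i => ∑ j, g (X i - X j) := by
    rw [sum_sum_filter_le_add_swap (fun i j => PiLp.single 2 i (g (X i - X j)))
      fun i => by simp [hg.map_zero], Finset.sum_comm]
    ext i
    simp
  rw [← sum_pair_gradients]
  exact hasGradientAt_sum fun i _ => hasGradientAt_sum fun j _ => hasGradientAt_pair i j

lemma gradient_pairwiseEnergy_eq_zero_iff (hf : ∀ u, HasGradientAt f (g u) u) (hg : g.Odd) :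
    gradient (pairwiseEnergy f) X = 0 ↔ ∀ i, ∑ j, g (X i - X j) = 0 := by
  rw [(hasGradientAt_pairwiseEnergy hf hg).gradient, PiLp.ext_iff]
  rfl

end PairwiseEnergy

section RadialWeight

variable {E : Type*} [NormedAddCommGroup E] {k k' : ℝ → ℝ}

/-- The mean-shift weight `G(u) = −k'(‖u‖²)` on an arbitrary normed group; `weightFn` is the case
of `ℝ^d`. -/
def radialWeight (k' : ℝ → ℝ) (u : E) : ℝ := -k' (‖u‖ ^ 2)

lemma radialWeight_neg (k' : ℝ → ℝ) (u : E) : radialWeight k' (-u) = radialWeight k' u := by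
  rw [radialWeight, norm_neg, radialWeight]

lemma radialWeight_inv_smul [NormedSpace ℝ E] (k' : ℝ → ℝ) (h : ℝ) (u : E) :
    radialWeight k' (h⁻¹ • u) = -k' (‖u‖ ^ 2 / h ^ 2) := by
  rw [radialWeight, norm_smul, mul_pow, norm_inv, inv_pow, Real.norm_eq_abs, sq_abs,
    div_eq_inv_mul]

lemma sum_radialWeight_pos {ι : Type*} {s : Finset ι} {u : ι → E} {i : ι}
    (hk'_nonpos : ∀ t, 0 ≤ t → k' t ≤ 0) (hk'_zero : k' 0 < 0) (hi : i ∈ s) (hu : u i = 0) :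
    0 < ∑ j ∈ s, radialWeight k' (u j) :=
  Finset.sum_pos' (fun _ _ => neg_nonneg.2 (hk'_nonpos _ (sq_nonneg _)))
    ⟨i, hi, by simpa [radialWeight, hu] using hk'_zero⟩

lemma hasGradientAt_comp_norm_sq_div_sq [InnerProductSpace ℝ E] [CompleteSpace E]
    (hk : ∀ t ∈ Set.Ici (0 : ℝ), HasDerivWithinAt k (k' t) (Set.Ici 0) t) (h : ℝ) (u : E) :
    HasGradientAt (fun u : E => k (‖u‖ ^ 2 / h ^ 2))
      (-(2 / h ^ 2) • radialWeight k' (h⁻¹ • u) • u) u := by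
  have div_sq_mem (v : E) : ‖v‖ ^ 2 / h ^ 2 ∈ Set.Ici 0 := Set.mem_Ici.2 (by positivity)
  have hasFDerivAt_norm_sq_div := (hasFDerivAt_id u).norm_sq.mul_const (h ^ 2)⁻¹
  rw [hasGradientAt_iff_hasFDerivAt, radialWeight_inv_smul]
  refine ((hk _ (div_sq_mem u)).comp_hasFDerivAt u hasFDerivAt_norm_sq_div
    (.of_forall div_sq_mem)).congr_fderiv ?_
  ext v
  simp only [id_eq, ContinuousLinearMap.comp_id, smul_apply, coe_innerSL_apply, nsmul_eq_mul,
    Nat.cast_ofNat, smul_eq_mul, neg_smul, smul_neg, neg_neg, map_smul,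
    InnerProductSpace.toDual_apply_apply]
  ring

end RadialWeight

theorem gradient_BMSObjective_eq_zero_iff_BMS_fixed_point_general
    {ι E : Type*} [Fintype ι] [LinearOrder ι] [NormedAddCommGroup E] [InnerProductSpace ℝ E]
    [CompleteSpace E] {k k' : ℝ → ℝ}
    (hk : ∀ t ∈ Set.Ici (0 : ℝ), HasDerivWithinAt k (k' t) (Set.Ici 0) t)
    (hk'_nonpos : ∀ t, 0 ≤ t → k' t ≤ 0) (hk'_zero : k' 0 < 0)
    {h : ℝ} (hh : h ≠ 0) (X : PiLp 2 fun _ : ι => E) :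
    (∀ i, 0 < ∑ j, radialWeight k' (h⁻¹ • (X i - X j))) ∧
    (gradient (pairwiseEnergy fun u : E => k (‖u‖ ^ 2 / h ^ 2)) X = 0 ↔
      ∀ i, X i = Finset.univ.centerMass (fun j => radialWeight k' (h⁻¹ • (X i - X j))) X) := by
  have weight_sum_pos (i : ι) : 0 < ∑ j, radialWeight k' (h⁻¹ • (X i - X j)) :=
    sum_radialWeight_pos hk'_nonpos hk'_zero (Finset.mem_univ i) (by simp)
  have force_odd : (fun u : E => -(2 / h ^ 2) • radialWeight k' (h⁻¹ • u) • u).Odd := fun u => by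
    simp only [smul_neg, radialWeight_neg]
  have scale_ne_zero : -(2 / h ^ 2) ≠ 0 := neg_ne_zero.2 (by positivity)
  refine ⟨weight_sum_pos, ?_⟩
  rw [gradient_pairwiseEnergy_eq_zero_iff (hasGradientAt_comp_norm_sq_div_sq hk h) force_odd]
  refine forall_congr' fun i => ?_
  rw [← Finset.smul_sum, smul_eq_zero_iff_right scale_ne_zero,
    sum_smul_sub_eq_zero_iff_eq_centerMass (weight_sum_pos i).ne']

/-- For a profile function `k` (C¹, non-increasing, convex, `k' < 0` on
`[0,1)`, with `k(1) = 0`, `k'(1) = 0`, extended by `0` beyond `1`) and the associated weight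
function `G(u) = −k'(‖u‖²)`, the denominators `Σⱼ G((x_i − x_j)/h)` are positive (since
`G(0) = −k'(0) > 0`), and the gradient of the BMS objective `L` vanishes at `X` if and only
if `X` is a fixed point of the blurring mean-shift transformation, i.e. each `x_i` equals
the `G`-weighted average of all the points. -/
theorem gradient_BMSObjective_eq_zero_iff_BMS_fixed_point
    {d n : ℕ} (k k' : ℝ → ℝ)
    (hC1 : ∀ t ∈ Set.Ici (0 : ℝ), HasDerivWithinAt k (k' t) (Set.Ici 0) t)
    (hk'cont : ContinuousOn k' (Set.Ici 0))
    (hknonneg : ∀ t ∈ Set.Icc (0 : ℝ) 1, 0 ≤ k t)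
    (hanti : AntitoneOn k (Set.Icc 0 1))
    (hconv : ConvexOn ℝ (Set.Icc 0 1) k)
    (hk'neg : ∀ t, 0 ≤ t → t < 1 → k' t < 0)
    (hk1 : k 1 = 0) (hk'1 : k' 1 = 0)
    (hkzero : ∀ t : ℝ, 1 ≤ t → k t = 0)
    (hk'zero : ∀ t : ℝ, 1 ≤ t → k' t = 0)
    (h : ℝ) (hh : 0 < h) (X : State d n) :
    (∀ i : Fin n, 0 < ∑ j : Fin n, weightFn k' ((h : ℝ)⁻¹ • (X i - X j))) ∧
    (gradient (BMSObjective k h) X = 0 ↔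
      ∀ i : Fin n,
        X i = (∑ j : Fin n, weightFn k' ((h : ℝ)⁻¹ • (X i - X j)))⁻¹ •
          ∑ j : Fin n, weightFn k' ((h : ℝ)⁻¹ • (X i - X j)) • X j) := by
  have hk'_nonpos : ∀ t, 0 ≤ t → k' t ≤ 0 := fun t ht =>
    (lt_or_ge t 1).elim (fun hlt => (hk'neg t ht hlt).le) fun hge => (hk'zero t hge).le
  exact gradient_BMSObjective_eq_zero_iff_BMS_fixed_point_general hC1 hk'_nonpos
    (hk'neg 0 le_rfl one_pos) hh.ne' X
end
end

section
/- Let k : [0,∞) → ℝ be a profile function extended by 0 beyond 1 (C¹ on [0,∞) with k(1) = 0 and k'(1) = 0), K(u) = k(‖u‖²), G(u) = −k'(‖u‖²), x₁, …, xₙ ∈ ℝ^d, h > 0, and let f̂(x) = (1/(n h^d)) Σ_{i=1}^n K((x − x_i)/h) be the kernel density estimate. Then for every x ∈ ℝ^d, the gradient of f̂ at x equals ∇f̂(x) = (2/(n h^{d+2})) · Σ_{i=1}^n G((x − x_i)/h)·(x_i − x). Consequently, whenever Σ_{i=1}^n G((x − x_i)/h) > 0, the shift vector m_h(x; X) = S_h(x;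 X) − x satisfies m_h(x; X) = (n h^{d+2} / (2 Σ_{i=1}^n G((x − x_i)/h))) · ∇f̂(x), i.e. the shift vector is a positive scalar multiple of the gradient of the kernel density estimate. -/
noncomputable section

open scoped BigOperators

/-- The kernel density estimate `f̂(x) = (1/(n hᵈ)) Σᵢ K((x − x_i)/h)` with
`K(u) = k(‖u‖²)`. -/
def kde {d n : ℕ} (k : ℝ → ℝ) (h : ℝ) (X : Fin n → Pt d) (x : Pt d) : ℝ :=
  (1 / (n * h ^ d)) * ∑ i : Fin n, k (‖(h : ℝ)⁻¹ • (x - X i)‖ ^ 2)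

/-- The mean-shift operator `S_h(x; X)`. -/
def meanShiftOp {d n : ℕ} (k' : ℝ → ℝ) (h : ℝ) (X : Fin n → Pt d) (x : Pt d) : Pt d :=
  (∑ i : Fin n, weightFn k' ((h : ℝ)⁻¹ • (x - X i)))⁻¹ •
    ∑ i : Fin n, weightFn k' ((h : ℝ)⁻¹ • (x - X i)) • X i

section Gradient

open scoped ComplexConjugate Topology

variable {𝕜 E ι : Type*} [RCLike 𝕜] [NormedAddCommGroup E] [InnerProductSpace 𝕜 E]
  [CompleteSpace E] {f : E → 𝕜} {f' x : E}

lemma hasGradientAt_const_mul (hf : HasGradientAt f f' x) (c : 𝕜) :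
    HasGradientAt (fun y => c * f y) (conj c • f') x := by
  rw [hasGradientAt_iff_hasFDerivAt, map_smulₛₗ, RCLike.conj_conj]
  exact hf.hasFDerivAt.const_mul c

lemma hasGradientAt_sum_s3 {t : Finset ι} {g : ι → E → 𝕜} {g' : ι → E}
    (hg : ∀ i ∈ t, HasGradientAt (g i) (g' i) x) :
    HasGradientAt (fun y => ∑ i ∈ t, g i y) (∑ i ∈ t, g' i) x := by
  rw [hasGradientAt_iff_hasFDerivAt, map_sum]
  exact HasFDerivAt.fun_sum fun i hi => (hg i hi).hasFDerivAt

lemma hasGradientAt_comp_of_hasDerivWithinAt {k : 𝕜 → 𝕜} {m : 𝕜} {s : Set 𝕜}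
    (hk : HasDerivWithinAt k m s (f x)) (hf : HasGradientAt f f' x)
    (hs : ∀ᶠ y in 𝓝 x, f y ∈ s) :
    HasGradientAt (fun y => k (f y)) (conj m • f') x := by
  rw [hasGradientAt_iff_hasFDerivAt, map_smulₛₗ, RCLike.conj_conj]
  exact hk.comp_hasFDerivAt x hf.hasFDerivAt hs

end Gradient

section RadialFunction

variable {E : Type*} [NormedAddCommGroup E] [InnerProductSpace ℝ E] [CompleteSpace E]

lemma hasGradientAt_norm_smul_sub_sq (c : ℝ) (a x : E) :
    HasGradientAt (fun y => ‖c • (y - a)‖ ^ 2) ((2 * c ^ 2) • (x - a)) x := by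
  rw [hasGradientAt_iff_hasFDerivAt]
  refine (((hasFDerivAt_id x).sub_const a).const_smul c).norm_sq.congr_fderiv ?_
  ext v
  change 2 • inner ℝ (c • (x - a)) (c • v) = inner ℝ ((2 * c ^ 2) • (x - a)) v
  simp only [real_inner_smul_left, real_inner_smul_right, two_nsmul]
  ring

-- The squared norm never leaves `[0, ∞)`, so a one-sided derivative of `k` at `0` is enough.
lemma hasGradientAt_comp_norm_smul_sub_sq {k : ℝ → ℝ} {m c : ℝ} {a x : E}
    (hk : HasDerivWithinAt k m (Set.Ici 0) (‖c • (x - a)‖ ^ 2)) :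
    HasGradientAt (fun y => k (‖c • (y - a)‖ ^ 2)) ((2 * c ^ 2 * m) • (x - a)) x := by
  have hcomp := hasGradientAt_comp_of_hasDerivWithinAt (f := fun y => ‖c • (y - a)‖ ^ 2) hk
    (hasGradientAt_norm_smul_sub_sq c a x)
    (.of_forall fun _ => Set.mem_Ici.2 (sq_nonneg _))
  rwa [conj_trivial, smul_smul, mul_comm m] at hcomp

end RadialFunction

lemma centerMass_sub_const {R E ι : Type*} [Field R] [AddCommGroup E] [Module R E]
    {t : Finset ι} {w : ι → R} (hw : ∑ i ∈ t, w i ≠ 0) (z : ι → E) (y : E) :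
    t.centerMass w z - y = t.centerMass w (fun i => z i - y) := by
  simp only [Finset.centerMass, smul_sub, Finset.sum_sub_distrib, ← Finset.sum_smul,
    inv_smul_smul₀ hw]

section MeanShift

variable {d n : ℕ} {k k' : ℝ → ℝ} {X : Fin n → Pt d} {h : ℝ} {x : Pt d}

lemma hasGradientAt_kde (hh : h ≠ 0)
    (hk : ∀ i, HasDerivWithinAt k (k' (‖h⁻¹ • (x - X i)‖ ^ 2)) (Set.Ici 0)
      (‖h⁻¹ • (x - X i)‖ ^ 2)) :
    HasGradientAt (kde k h X)
      ((2 / (n * h ^ (d + 2))) • ∑ i, weightFn k' (h⁻¹ • (x - X i)) • (X i - x)) x := by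
  have hterm (i : Fin n) : HasGradientAt (fun y => k (‖h⁻¹ • (y - X i)‖ ^ 2))
      ((2 * h⁻¹ ^ 2) • weightFn k' (h⁻¹ • (x - X i)) • (X i - x)) x := by
    rw [weightFn, neg_smul, ← smul_neg, neg_sub, smul_smul]
    exact hasGradientAt_comp_norm_smul_sub_sq (hk i)
  have hcoef : 1 / (n * h ^ d) * (2 * h⁻¹ ^ 2) = 2 / (n * h ^ (d + 2)) := by
    field_simp
    ring
  have hkde := hasGradientAt_const_mul (hasGradientAt_sum_s3 fun i (_ : i ∈ Finset.univ) => hterm i)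
    (1 / (n * h ^ d))
  rwa [conj_trivial, ← Finset.smul_sum, smul_smul, hcoef] at hkde

lemma meanShiftOp_sub_self (hW : ∑ i, weightFn k' (h⁻¹ • (x - X i)) ≠ 0) :
    meanShiftOp k' h X x - x =
      (∑ i, weightFn k' (h⁻¹ • (x - X i)))⁻¹ •
        ∑ i, weightFn k' (h⁻¹ • (x - X i)) • (X i - x) :=
  centerMass_sub_const hW X x

end MeanShift

theorem gradient_kde_and_shift_vector_general
    {d n : ℕ} (hn : 0 < n) (k k' : ℝ → ℝ) (X : Fin n → Pt d) {h : ℝ} (hh : h ≠ 0) (x : Pt d)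
    (hk : ∀ i, HasDerivWithinAt k (k' (‖h⁻¹ • (x - X i)‖ ^ 2)) (Set.Ici 0)
      (‖h⁻¹ • (x - X i)‖ ^ 2)) :
    HasGradientAt (kde k h X)
        ((2 / (n * h ^ (d + 2))) • ∑ i, weightFn k' (h⁻¹ • (x - X i)) • (X i - x)) x ∧
      (∑ i, weightFn k' (h⁻¹ • (x - X i)) ≠ 0 →
        meanShiftOp k' h X x - x =
          ((n * h ^ (d + 2)) / (2 * ∑ i, weightFn k' (h⁻¹ • (x - X i)))) •
            gradient (kde k h X) x) := by
  have hgrad := hasGradientAt_kde hh hk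
  refine ⟨hgrad, fun hW => ?_⟩
  rw [meanShiftOp_sub_self hW, hgrad.gradient, smul_smul]
  congr 1
  field_simp

/-- For a profile function `k` extended by `0` beyond `1` (C¹ on `[0,∞)`
with `k(1) = 0` and `k'(1) = 0`), the gradient of the kernel density estimate satisfies
`∇f̂(x) = (2/(n h^{d+2})) Σᵢ G((x − x_i)/h)(x_i − x)`, and whenever the denominator
`Σᵢ G((x − x_i)/h)` is positive, the shift vector `m_h(x; X) = S_h(x; X) − x` is the
positive scalar multiple `(n h^{d+2} / (2 Σᵢ G((x − x_i)/h)))` of `∇f̂(x)`. -/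
theorem gradient_kde_and_shift_vector
    {d n : ℕ} (hn : 0 < n) (k k' : ℝ → ℝ)
    (hC1 : ∀ t ∈ Set.Ici (0 : ℝ), HasDerivWithinAt k (k' t) (Set.Ici 0) t)
    (hk'cont : ContinuousOn k' (Set.Ici 0))
    (hk1 : k 1 = 0) (hk'1 : k' 1 = 0)
    (hkzero : ∀ t : ℝ, 1 ≤ t → k t = 0)
    (X : Fin n → Pt d) (h : ℝ) (hh : 0 < h) :
    (∀ x : Pt d,
        gradient (kde k h X) x =
          (2 / (n * h ^ (d + 2))) •
            ∑ i : Fin n, weightFn k' ((h : ℝ)⁻¹ • (x - X i)) • (X i - x)) ∧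
    (∀ x : Pt d,
        0 < ∑ i : Fin n, weightFn k' ((h : ℝ)⁻¹ • (x - X i)) →
        meanShiftOp k' h X x - x =
          ((n * h ^ (d + 2)) / (2 * ∑ i : Fin n, weightFn k' ((h : ℝ)⁻¹ • (x - X i)))) •
            gradient (kde k h X) x) := by
  have hgeneral (x : Pt d) := gradient_kde_and_shift_vector_general hn k k' X hh.ne' x
    fun i => hC1 _ (Set.mem_Ici.2 (sq_nonneg ‖h⁻¹ • (x - X i)‖))
  exact ⟨fun x => (hgeneral x).1.gradient, fun x hW => (hgeneral x).2 hW.ne'⟩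
end
end
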